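/- arXiv:2107.08472 — 3 statements merged into one kernel-verified Lean document; each statement's English description precedes it below -/
import Mathlib

section
/- If v is a pair of bivariate polynomials of degree at most 4 that vanishes identically on the boundary of a nondegenerate triangle K and satisfies div v = 0 on K, then v is identically zero on K. -/
/-!
An affine map takes the reference triangle `{s, t ≥ 0, s + t ≤ 1}` onto `K`, and the Piola transform
of `v` along it is again a pair of polynomials of degree at most 4 that vanishes on the boundary;
its divergence is `det` times that of `v` (`eval_pderiv_pullback`).
A polynomial of degree at most 4 that vanishes on the boundary of the reference triangle has the
form `s t (1 - s - t) (α + β s + γ t)` (`exists_eq_bubble`). So the transformed field is the bubble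
`s t (1 - s - t)` times an affine field `w`. On an edge the divergence is the normal derivative
of the bubble times the normal component of `w`; hence the normal component of `w` vanishes on
each edge, `w` vanishes at the three vertices, and being affine it is zero
(`bubble_eq_zero_of_div`). As `det ≠ 0`, the transform is invertible and `v` is zero.
-/

/-- Evaluation of a bivariate polynomial at a point of `ℝ × ℝ`. -/
noncomputable def evP (q : MvPolynomial (Fin 2) ℝ) (p : ℝ × ℝ) : ℝ :=
  MvPolynomial.eval ![p.1, p.2] q

open MvPolynomial

/-! ### Quartics vanishing on the boundary of the reference triangle -/

theorem eq_sum_of_totalDegree_le_four (p : MvPolynomial (Fin 2) ℝ) (h : p.totalDegree ≤ 4) :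
    p = ∑ x ∈ Finset.range 5 ×ˢ Finset.range 5,
      monomial (Finsupp.single 0 x.1 + Finsupp.single 1 x.2)
        (coeff (Finsupp.single 0 x.1 + Finsupp.single 1 x.2) p) := by
  ext m
  have hm : m = Finsupp.single 0 (m 0) + Finsupp.single 1 (m 1) := by
    ext i; fin_cases i <;> simp
  rw [coeff_sum, Finset.sum_eq_single (m 0, m 1)]
  · rw [← hm]; simp
  · rintro ⟨i, j⟩ - hne
    rw [coeff_monomial, if_neg]
    rintro rfl
    simp at hne
  · intro hmem
    rw [← hm, coeff_monomial, if_pos rfl]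
    by_contra hc
    have := le_totalDegree (mem_support_iff.2 hc)
    rw [Finsupp.sum_fintype _ _ (by simp), Fin.sum_univ_two] at this
    simp at hmem
    omega

theorem coeff_eq_zero_of_four_lt (p : MvPolynomial (Fin 2) ℝ) (h : p.totalDegree ≤ 4) (i j : ℕ)
    (hij : 4 < i + j) : coeff (Finsupp.single 0 i + Finsupp.single 1 j) p = 0 := by
  by_contra hc
  have := le_totalDegree (mem_support_iff.2 hc)
  rw [Finsupp.sum_fintype _ _ (by simp), Fin.sum_univ_two] at this
  simp at this
  omega

/-- The polynomial `s t (1 - s - t) (α + β s + γ t)`: the cubic bubble of the reference triangle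
times an affine function. -/
noncomputable def bubble (α β γ : ℝ) : MvPolynomial (Fin 2) ℝ :=
  X 0 * X 1 * (1 - X 0 - X 1) * (C α + C β * X 0 + C γ * X 1)

/-- Five points on each edge of the reference triangle determine the coefficients of the
restrictions to the edges. -/
theorem exists_eq_bubble (p : MvPolynomial (Fin 2) ℝ) (h : p.totalDegree ≤ 4)
    (h1 : ∀ s : ℝ, 0 ≤ s → s ≤ 1 → eval ![s, 0] p = 0)
    (h2 : ∀ s : ℝ, 0 ≤ s → s ≤ 1 → eval ![0, s] p = 0)
    (h3 : ∀ s : ℝ, 0 ≤ s → s ≤ 1 → eval ![s, 1 - s] p = 0) :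
    ∃ α β γ : ℝ, p = bubble α β γ := by
  obtain ⟨a, ha⟩ : ∃ a : ℕ → ℕ → ℝ,
      a = fun i j => coeff (Finsupp.single 0 i + Finsupp.single 1 j) p := ⟨_, rfl⟩
  have hp : p = ∑ i ∈ Finset.range 5, ∑ j ∈ Finset.range 5, C (a i j) * X 0 ^ i * X 1 ^ j := by
    conv_lhs => rw [eq_sum_of_totalDegree_le_four p h, Finset.sum_product]
    refine Finset.sum_congr rfl fun i _ => Finset.sum_congr rfl fun j _ => ?_
    rw [ha, X_pow_eq_monomial, X_pow_eq_monomial, C_mul_monomial, monomial_mul]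
    simp
  have hz : ∀ i j, 4 < i + j → a i j = 0 := fun i j hij => by
    rw [ha]; exact coeff_eq_zero_of_four_lt p h i j hij
  clear ha
  simp only [Finset.sum_range_succ, Finset.sum_range_zero, hz 1 4 (by norm_num),
    hz 2 3 (by norm_num), hz 2 4 (by norm_num), hz 3 2 (by norm_num), hz 3 3 (by norm_num),
    hz 3 4 (by norm_num), hz 4 1 (by norm_num), hz 4 2 (by norm_num), hz 4 3 (by norm_num),
    hz 4 4 (by norm_num)] at hp
  clear hz h
  subst hp
  simp at h1 h2 h3
  have e0 := h1 0 (by norm_num) (by norm_num)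
  have e1 := h1 (1/4) (by norm_num) (by norm_num)
  have e2 := h1 (1/2) (by norm_num) (by norm_num)
  have e3 := h1 (3/4) (by norm_num) (by norm_num)
  have e4 := h1 1 (by norm_num) (by norm_num)
  have f1 := h2 (1/4) (by norm_num) (by norm_num)
  have f2 := h2 (1/2) (by norm_num) (by norm_num)
  have f3 := h2 (3/4) (by norm_num) (by norm_num)
  have f4 := h2 1 (by norm_num) (by norm_num)
  have g1 := h3 (1/4) (by norm_num) (by norm_num)
  have g2 := h3 (1/2) (by norm_num) (by norm_num)
  have g3 := h3 (3/4) (by norm_num) (by norm_num)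
  clear h1 h2 h3
  norm_num at e0 e1 e2 e3 e4 f1 f2 f3 f4 g1 g2 g3
  have a00 : a 0 0 = 0 := by linarith
  have a10 : a 1 0 = 0 := by linarith
  have a20 : a 2 0 = 0 := by linarith
  have a30 : a 3 0 = 0 := by linarith
  have a40 : a 4 0 = 0 := by linarith
  have a01 : a 0 1 = 0 := by linarith
  have a02 : a 0 2 = 0 := by linarith
  have a03 : a 0 3 = 0 := by linarith
  have a04 : a 0 4 = 0 := by linarith
  have a21 : a 2 1 = - a 3 1 - a 1 1 := by linarith
  have a12 : a 1 2 = - a 1 3 - a 1 1 := by linarith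
  have a22 : a 2 2 = a 3 1 + a 1 3 := by linarith
  refine ⟨a 1 1, - a 3 1, - a 1 3, ?_⟩
  simp only [bubble, a00, a10, a20, a30, a40, a01, a02, a03, a04, a21, a12, a22, map_add, map_sub,
    map_neg, map_zero]
  ring

/-! ### Divergence-free fields on the reference triangle -/

theorem eval_div_bubble (α β γ α' β' γ' s t : ℝ) :
    eval ![s, t] (pderiv 0 (bubble α β γ) + pderiv 1 (bubble α' β' γ')) =
      (t * (1 - s - t) - s * t) * (α + β * s + γ * t) + s * t * (1 - s - t) * β +
      ((s * (1 - s - t) - s * t) * (α' + β' * s + γ' * t) + s * t * (1 - s - t) * γ') := by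
  simp [bubble, pderiv_X]
  ring

/-- Two points on each edge suffice for the normal component of the affine factor, which is
affine along the edge. -/
theorem bubble_eq_zero_of_div (α β γ α' β' γ' : ℝ)
    (h : ∀ s t : ℝ, 0 ≤ s → 0 ≤ t → s + t ≤ 1 →
      eval ![s, t] (pderiv 0 (bubble α β γ) + pderiv 1 (bubble α' β' γ')) = 0) :
    bubble α β γ = 0 ∧ bubble α' β' γ' = 0 := by
  simp only [eval_div_bubble] at h
  have e1 := h (1/3) 0 (by norm_num) (by norm_num) (by norm_num)
  have e2 := h (2/3) 0 (by norm_num) (by norm_num) (by norm_num)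
  have e3 := h 0 (1/3) (by norm_num) (by norm_num) (by norm_num)
  have e4 := h 0 (2/3) (by norm_num) (by norm_num) (by norm_num)
  have e5 := h (1/3) (2/3) (by norm_num) (by norm_num) (by norm_num)
  have e6 := h (2/3) (1/3) (by norm_num) (by norm_num) (by norm_num)
  clear h
  norm_num at e1 e2 e3 e4 e5 e6
  have k1 : α = 0 := by linarith
  have k2 : β = 0 := by linarith
  have k3 : γ = 0 := by linarith
  have k4 : α' = 0 := by linarith
  have k5 : β' = 0 := by linarith
  have k6 : γ' = 0 := by linarith
  simp [bubble, k1, k2, k3, k4, k5, k6]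

/-! ### Transport along affine maps -/

/-- The composition of `p` with the affine map `(s, t) ↦ A + s b + t c`. -/
noncomputable def pullback (A b c : ℝ × ℝ) (p : MvPolynomial (Fin 2) ℝ) :
    MvPolynomial (Fin 2) ℝ :=
  aeval ![C A.1 + C b.1 * X 0 + C c.1 * X 1, C A.2 + C b.2 * X 0 + C c.2 * X 1] p

theorem eval_pullback (A b c : ℝ × ℝ) (p : MvPolynomial (Fin 2) ℝ) (s t : ℝ) :
    eval ![s, t] (pullback A b c p) = evP p (A + s • b + t • c) := by
  rw [pullback, evP, aeval_def, eval_eval₂]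
  rw [eval₂_eq', eval_eq']
  simp [Fin.prod_univ_two]
  refine Finset.sum_congr rfl fun d _ => ?_
  ring

/-- The chain rule for composition with an affine map. -/
theorem pderiv_pullback (A b c : ℝ × ℝ) (p : MvPolynomial (Fin 2) ℝ) :
    pderiv 0 (pullback A b c p) =
      C b.1 * pullback A b c (pderiv 0 p) + C b.2 * pullback A b c (pderiv 1 p) ∧
    pderiv 1 (pullback A b c p) =
      C c.1 * pullback A b c (pderiv 0 p) + C c.2 * pullback A b c (pderiv 1 p) := by
  simp only [pullback]
  induction p using MvPolynomial.induction_on with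
  | C a => simp
  | add p q hp hq =>
    constructor
    · simp only [map_add, hp.1, hq.1]; ring
    · simp only [map_add, hp.2, hq.2]; ring
  | mul_X p i hp =>
    constructor
    · simp only [map_mul, pderiv_mul, hp.1, map_add, aeval_X]
      fin_cases i <;> simp [pderiv_X] <;> ring
    · simp only [map_mul, pderiv_mul, hp.2, map_add, aeval_X]
      fin_cases i <;> simp [pderiv_X] <;> ring

theorem totalDegree_affine_le (a b c : ℝ) :
    (C a + C b * X 0 + C c * X 1 : MvPolynomial (Fin 2) ℝ).totalDegree ≤ 1 := by
  have hX : ∀ (r : ℝ) (i : Fin 2), (C r * X i : MvPolynomial (Fin 2) ℝ).totalDegree ≤ 1 :=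
    fun r i => (totalDegree_mul _ _).trans (by simp)
  exact (totalDegree_add _ _).trans (max_le ((totalDegree_add _ _).trans
    (max_le (by simp) (hX _ _))) (hX _ _))

theorem totalDegree_pullback_le (A b c : ℝ × ℝ) (p : MvPolynomial (Fin 2) ℝ) :
    (pullback A b c p).totalDegree ≤ p.totalDegree := by
  rw [pullback, aeval_def, eval₂_eq']
  refine totalDegree_finsetSum_le fun d hd => ?_
  have hd' := le_totalDegree hd
  rw [Finsupp.sum_fintype _ _ (by simp), Fin.sum_univ_two] at hd'
  refine (totalDegree_mul _ _).trans ?_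
  rw [Fin.prod_univ_two, algebraMap_eq, totalDegree_C, zero_add]
  refine (totalDegree_mul _ _).trans (le_trans (add_le_add ?_ ?_) hd')
  · exact (totalDegree_pow _ _).trans
      ((Nat.mul_le_mul_left _ (totalDegree_affine_le _ _ _)).trans (by simp))
  · exact (totalDegree_pow _ _).trans
      ((Nat.mul_le_mul_left _ (totalDegree_affine_le _ _ _)).trans (by simp))

/-- The Piola transform of a field multiplies its divergence by the determinant of the map. -/
theorem eval_pderiv_pullback (A b c : ℝ × ℝ) (v1 v2 : MvPolynomial (Fin 2) ℝ) (s t : ℝ) :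
    eval ![s, t] (pderiv 0 (C c.2 * pullback A b c v1 - C c.1 * pullback A b c v2) +
      pderiv 1 (C b.1 * pullback A b c v2 - C b.2 * pullback A b c v1)) =
    (b.1 * c.2 - b.2 * c.1) * evP (pderiv 0 v1 + pderiv 1 v2) (A + s • b + t • c) := by
  rw [← eval_pullback]
  have hadd : pullback A b c (pderiv 0 v1 + pderiv 1 v2) =
      pullback A b c (pderiv 0 v1) + pullback A b c (pderiv 1 v2) := map_add _ _ _
  rw [hadd]
  simp only [map_sub, map_add, pderiv_C_mul, (pderiv_pullback A b c _).1,
    (pderiv_pullback A b c _).2, map_mul, eval_C]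
  ring

/-! ### General triangles -/

theorem det_ne_zero_of_affineIndependent (A B C : ℝ × ℝ) (hK : AffineIndependent ℝ ![A, B, C]) :
    (B - A).1 * (C - A).2 - (B - A).2 * (C - A).1 ≠ 0 := by
  intro h0
  have key : ∀ x y : ℝ, x • (B - A) + y • (C - A) = 0 → x = 0 ∧ y = 0 := by
    intro x y hxy
    rw [affineIndependent_iff] at hK
    have := hK Finset.univ ![-x - y, x, y]
      (by simp [Fin.sum_univ_three]; ring) (by
      simp only [Fin.sum_univ_three, Matrix.cons_val]
      rw [← hxy]; module)
    exact ⟨this 1 (by simp), this 2 (by simp)⟩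
  -- A zero determinant makes the rows of the adjugate matrix relations between the edges.
  have r1 := key (C - A).2 (-(B - A).2) (by
    ext
    · simp only [Prod.fst_add, Prod.smul_fst, smul_eq_mul, Prod.fst_zero]; linarith
    · simp only [Prod.snd_add, Prod.smul_snd, smul_eq_mul, Prod.snd_zero]; ring)
  have r2 := key (C - A).1 (-(B - A).1) (by
    ext
    · simp only [Prod.fst_add, Prod.smul_fst, smul_eq_mul, Prod.fst_zero]; ring
    · simp only [Prod.snd_add, Prod.smul_snd, smul_eq_mul, Prod.snd_zero]; linarith)
  have hB : B - A = 0 := Prod.ext (neg_eq_zero.1 r2.2) (neg_eq_zero.1 r1.2)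
  exact one_ne_zero (key 1 0 (by simp [hB])).1

/-- If a pair of degree-≤4 polynomials vanishes on the boundary of a nondegenerate
    triangle K and is divergence-free on K, then it vanishes identically on K. -/
theorem stmt2 (A B C : ℝ × ℝ) (hK : AffineIndependent ℝ ![A, B, C])
    (v1 v2 : MvPolynomial (Fin 2) ℝ)
    (hd1 : v1.totalDegree ≤ 4) (hd2 : v2.totalDegree ≤ 4)
    (hbdy : ∀ p ∈ segment ℝ A B ∪ segment ℝ B C ∪ segment ℝ C A,
      evP v1 p = 0 ∧ evP v2 p = 0)
    (hdiv : ∀ p ∈ convexHull ℝ ({A, B, C} : Set (ℝ × ℝ)),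
      evP (MvPolynomial.pderiv 0 v1 + MvPolynomial.pderiv 1 v2) p = 0) :
    ∀ p ∈ convexHull ℝ ({A, B, C} : Set (ℝ × ℝ)), evP v1 p = 0 ∧ evP v2 p = 0 := by
  have hdet := det_ne_zero_of_affineIndependent A B C hK
  obtain ⟨b, hb⟩ : ∃ b, b = B - A := ⟨_, rfl⟩
  obtain ⟨c, hc⟩ : ∃ c, c = C - A := ⟨_, rfl⟩
  rw [← hb, ← hc] at hdet
  have hpt : ∀ s t : ℝ, A + s • b + t • c = (1 - s - t) • A + s • B + t • C := by
    intro s t; rw [hb, hc]; module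
  have hAB : ∀ s : ℝ, 0 ≤ s → s ≤ 1 →
      evP v1 (A + s • b + (0 : ℝ) • c) = 0 ∧ evP v2 (A + s • b + (0 : ℝ) • c) = 0 := by
    intro s h0 h1
    refine hbdy _ (Or.inl (Or.inl ⟨1 - s, s, by linarith, h0, by ring, ?_⟩))
    rw [hpt]; module
  have hAC : ∀ s : ℝ, 0 ≤ s → s ≤ 1 →
      evP v1 (A + (0 : ℝ) • b + s • c) = 0 ∧ evP v2 (A + (0 : ℝ) • b + s • c) = 0 := by
    intro s h0 h1
    refine hbdy _ (Or.inr ⟨s, 1 - s, h0, by linarith, by ring, ?_⟩)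
    rw [hpt]; module
  have hBC : ∀ s : ℝ, 0 ≤ s → s ≤ 1 →
      evP v1 (A + s • b + (1 - s) • c) = 0 ∧ evP v2 (A + s • b + (1 - s) • c) = 0 := by
    intro s h0 h1
    refine hbdy _ (Or.inl (Or.inr ⟨s, 1 - s, h0, by linarith, by ring, ?_⟩))
    rw [hpt]; module
  have hin : ∀ s t : ℝ, 0 ≤ s → 0 ≤ t → s + t ≤ 1 →
      A + s • b + t • c ∈ convexHull ℝ ({A, B, C} : Set (ℝ × ℝ)) := by
    intro s t hs ht hst
    rw [hpt]
    have hmem : ∀ x ∈ ({A, B, C} : Set (ℝ × ℝ)), x ∈ convexHull ℝ ({A, B, C} : Set (ℝ × ℝ)) :=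
      fun x hx => subset_convexHull ℝ _ hx
    have := (convex_convexHull ℝ ({A, B, C} : Set (ℝ × ℝ))).sum_mem (t := Finset.univ)
      (w := ![1 - s - t, s, t]) (z := ![A, B, C])
      (by intro i _; fin_cases i <;> simp <;> linarith)
      (by simp [Fin.sum_univ_three]; ring)
      (by intro i _; fin_cases i <;> exact hmem _ (by simp))
    simpa [Fin.sum_univ_three] using this
  have hdeg : ∀ (x y : ℝ) (p q : MvPolynomial (Fin 2) ℝ), p.totalDegree ≤ 4 → q.totalDegree ≤ 4 →
      (MvPolynomial.C x * pullback A b c p - MvPolynomial.C y * pullback A b c q).totalDegree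
        ≤ 4 := by
    intro x y p q hp hq
    have hC : ∀ (x : ℝ) (p : MvPolynomial (Fin 2) ℝ), p.totalDegree ≤ 4 →
        (MvPolynomial.C x * pullback A b c p).totalDegree ≤ 4 := fun x p hp =>
      (totalDegree_mul _ _).trans (by
        rw [totalDegree_C, zero_add]; exact (totalDegree_pullback_le _ _ _ _).trans hp)
    exact (totalDegree_sub _ _).trans (max_le (hC x p hp) (hC y q hq))
  obtain ⟨α, β, γ, hu1⟩ := exists_eq_bubble
    (MvPolynomial.C c.2 * pullback A b c v1 - MvPolynomial.C c.1 * pullback A b c v2)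
    (hdeg _ _ _ _ hd1 hd2)
    (fun s h0 h1 => by simp [eval_pullback, -zero_smul, hAB s h0 h1])
    (fun s h0 h1 => by simp [eval_pullback, -zero_smul, hAC s h0 h1])
    (fun s h0 h1 => by simp [eval_pullback, hBC s h0 h1])
  obtain ⟨α', β', γ', hu2⟩ := exists_eq_bubble
    (MvPolynomial.C b.1 * pullback A b c v2 - MvPolynomial.C b.2 * pullback A b c v1)
    (hdeg _ _ _ _ hd2 hd1)
    (fun s h0 h1 => by simp [eval_pullback, -zero_smul, hAB s h0 h1])
    (fun s h0 h1 => by simp [eval_pullback, -zero_smul, hAC s h0 h1])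
    (fun s h0 h1 => by simp [eval_pullback, hBC s h0 h1])
  obtain ⟨hz1, hz2⟩ := bubble_eq_zero_of_div α β γ α' β' γ' (by
    intro s t hs ht hst
    rw [← hu1, ← hu2, eval_pderiv_pullback, hdiv _ (hin s t hs ht hst), mul_zero])
  rw [hz1] at hu1
  rw [hz2] at hu2
  intro p _
  -- Cramer's rule: every point of the plane is in the range of the affine map.
  obtain ⟨s, t, rfl⟩ : ∃ s t : ℝ, p = A + s • b + t • c := by
    obtain ⟨r, hr⟩ : ∃ r, (b.1 * c.2 - b.2 * c.1) * r = 1 := ⟨_, mul_inv_cancel₀ hdet⟩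
    refine ⟨((p - A).1 * c.2 - (p - A).2 * c.1) * r, (b.1 * (p - A).2 - b.2 * (p - A).1) * r, ?_⟩
    ext
    · simp only [Prod.fst_add, Prod.smul_fst, smul_eq_mul, Prod.fst_sub, Prod.snd_sub]
      linear_combination -(p.1 - A.1) * hr
    · simp only [Prod.snd_add, Prod.smul_snd, smul_eq_mul, Prod.fst_sub, Prod.snd_sub]
      linear_combination -(p.2 - A.2) * hr
  have w1 := congrArg (eval ![s, t]) hu1
  have w2 := congrArg (eval ![s, t]) hu2
  simp only [map_sub, map_mul, eval_C, eval_pullback, map_zero] at w1 w2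
  constructor
  · refine (mul_eq_zero.1 (?_ : (b.1 * c.2 - b.2 * c.1) * _ = 0)).resolve_left hdet
    linear_combination b.1 * w1 + c.1 * w2
  · refine (mul_eq_zero.1 (?_ : (b.1 * c.2 - b.2 * c.1) * _ = 0)).resolve_left hdet
    linear_combination b.2 * w1 + c.2 * w2
end

section
/- Let K be a nondegenerate triangle, and let N(K) = {q ∈ P^3 : q vanishes at all three vertices of K and ∫_K q = 0}, S(K) = span of the three sting functions of K, and C(K) = constants. Then P^3 restricted to K decomposes as the direct sum N(K) ⊕ (S(K) ⊕ C(K)), where N(K) is L^2(K)-orthogonal to S(K) ⊕ C(K). In particular dim N(K) = 6, dim S(K) = 3, dim C(K) = 1, and dim P^3 = 10. -/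
/-!
The space `N(K)` is the kernel, in the polynomials of degree at most 3, of the four functionals
`q ↦ q(A), q(B), q(C), ∫_K q` (`vertexMean`). The integral is the inner product with `1`, and
the vertex values are, up to the factor `|K|/100`, the inner products with the sting functions.
Orthogonality of `N(K)` to the stings and the constants is therefore immediate.

The rest follows from the bijectivity of `vertexMean` on the formal combinations
`(a, c) ↦ ∑ aᵢ sᵢ + c` (`bijective_vertexMean_comp`). Between four-dimensional spaces it suffices
to check injectivity. If `w = ∑ aᵢ sᵢ + c` lies in `N(K)`, then it is orthogonal to itself, so
`∫_K w² = 0` and `w = 0` as a polynomial (`eq_zero_of_setIntegral_eq_zero`). Integrating `w`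
against the bubble `λ₀λ₁λ₂`, which vanishes at the vertices but has nonzero mean, gives `c = 0`;
integrating against the barycentric coordinate `λⱼ` then gives `aⱼ = 0`. Surjectivity onto the four
functionals also yields `dim N(K) = 10 - 4` by rank-nullity.
-/

open MeasureTheory

/-- Membership in N(K): degree ≤ 3, vanishing at the three vertices, zero mean over K. -/
noncomputable def memN (A B C : ℝ × ℝ) (n : MvPolynomial (Fin 2) ℝ) : Prop :=
  n.totalDegree ≤ 3 ∧ (∀ i : Fin 3, evP n (![A, B, C] i) = 0) ∧
    (∫ p in convexHull ℝ ({A, B, C} : Set (ℝ × ℝ)), evP n p) = 0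

open MvPolynomial

/-! ### Evaluation of bivariate polynomials -/

lemma continuous_evP (q : MvPolynomial (Fin 2) ℝ) : Continuous (evP q) := by
  unfold evP
  refine (MvPolynomial.continuous_eval q).comp ?_
  refine continuous_pi fun i => ?_
  fin_cases i
  · exact continuous_fst
  · exact continuous_snd

lemma evP_add (p q : MvPolynomial (Fin 2) ℝ) (x : ℝ × ℝ) :
    evP (p + q) x = evP p x + evP q x := by simp [evP]

lemma evP_mul (p q : MvPolynomial (Fin 2) ℝ) (x : ℝ × ℝ) :
    evP (p * q) x = evP p x * evP q x := by simp [evP]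

lemma evP_smul (c : ℝ) (q : MvPolynomial (Fin 2) ℝ) (x : ℝ × ℝ) :
    evP (c • q) x = c * evP q x := by simp [evP]

lemma evP_C (c : ℝ) (x : ℝ × ℝ) : evP (MvPolynomial.C c) x = c := by simp [evP]

lemma evP_sum {ι : Type*} (t : Finset ι) (f : ι → MvPolynomial (Fin 2) ℝ) (x : ℝ × ℝ) :
    evP (∑ i ∈ t, f i) x = ∑ i ∈ t, evP (f i) x := by simp [evP]

/-- The triangle with vertices `A`, `B`, `C`. -/
abbrev triangle (A B C : ℝ × ℝ) : Set (ℝ × ℝ) := convexHull ℝ {A, B, C}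

lemma isCompact_triangle (A B C : ℝ × ℝ) : IsCompact (triangle A B C) :=
  (Set.toFinite {A, B, C}).isCompact_convexHull (𝕜 := ℝ)

lemma integrableOn_evP (A B C : ℝ × ℝ) (q : MvPolynomial (Fin 2) ℝ) :
    IntegrableOn (evP q) (triangle A B C) :=
  (continuous_evP q).continuousOn.integrableOn_compact (isCompact_triangle A B C)

lemma eq_zero_of_evP_eq_zero_on_open {q : MvPolynomial (Fin 2) ℝ} {U : Set (ℝ × ℝ)}
    (hU : IsOpen U) (hne : U.Nonempty) (h : ∀ x ∈ U, evP q x = 0) : q = 0 := by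
  obtain ⟨⟨a, b⟩, hx⟩ := hne
  obtain ⟨u, hu, v, hv, huv⟩ := mem_nhds_prod_iff.1 (hU.mem_nhds hx)
  refine MvPolynomial.funext_set ![u, v] (fun i => ?_) fun x hx => ?_
  · fin_cases i
    · exact infinite_of_mem_nhds a hu
    · exact infinite_of_mem_nhds b hv
  · have h0 := h (x 0, x 1) (huv ⟨hx 0 trivial, hx 1 trivial⟩)
    have hv : ![x 0, x 1] = x := by
      ext i
      fin_cases i <;> rfl
    simpa [evP, hv] using h0

lemma eq_zero_of_setIntegral_eq_zero {K : Set (ℝ × ℝ)} (hK : IsCompact K)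
    (hne : (interior K).Nonempty) {q : MvPolynomial (Fin 2) ℝ} (hq : ∀ x ∈ K, 0 ≤ evP q x)
    (h : ∫ x in K, evP q x = 0) : q = 0 := by
  have hae : evP q =ᵐ[volume.restrict K] 0 :=
    (setIntegral_eq_zero_iff_of_nonneg_ae
      ((ae_restrict_iff' hK.measurableSet).2 (Filter.Eventually.of_forall hq))
      ((continuous_evP q).continuousOn.integrableOn_compact hK)).1 h
  refine eq_zero_of_evP_eq_zero_on_open isOpen_interior hne ?_
  exact Measure.eqOn_open_of_ae_eq (ae_restrict_of_ae_restrict_of_subset interior_subset hae)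
    isOpen_interior (continuous_evP q).continuousOn continuousOn_const

/-! ### Barycentric coordinates -/

/-- An affine function on the plane is given by a polynomial of degree at most one. -/
lemma exists_polynomial_of_affineMap (f : ℝ × ℝ →ᵃ[ℝ] ℝ) :
    ∃ q : MvPolynomial (Fin 2) ℝ, q.totalDegree ≤ 1 ∧ ∀ x, evP q x = f x := by
  refine ⟨C (f 0) + C (f.linear (1, 0)) * X 0 + C (f.linear (0, 1)) * X 1, ?_, fun x => ?_⟩
  · refine (totalDegree_add _ _).trans (max_le ((totalDegree_add _ _).trans (max_le ?_ ?_)) ?_)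
    · simp
    · exact (totalDegree_mul _ _).trans (by simp)
    · exact (totalDegree_mul _ _).trans (by simp)
  · have h1 : f x = f.linear x + f 0 := by
      simpa using f.map_vadd 0 x
    have h2 : x = x.1 • ((1, 0) : ℝ × ℝ) + x.2 • ((0, 1) : ℝ × ℝ) := by
      ext <;> simp
    have h3 : f.linear x = x.1 * f.linear (1, 0) + x.2 * f.linear (0, 1) := by
      conv_lhs => rw [h2]
      rw [map_add, map_smul, map_smul, smul_eq_mul, smul_eq_mul]
    rw [h1, h3]
    simp [evP]
    ring

lemma range_vertices (A B C : ℝ × ℝ) : Set.range ![A, B, C] = {A, B, C} := by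
  ext x
  simp
  tauto

/-- The barycentric coordinates of a nondegenerate triangle, as polynomials. -/
lemma exists_barycentric {A B C : ℝ × ℝ} (hK : AffineIndependent ℝ ![A, B, C]) :
    (interior (triangle A B C)).Nonempty ∧
    ∃ l : Fin 3 → MvPolynomial (Fin 2) ℝ, (∀ i, (l i).totalDegree ≤ 1) ∧
      (∀ i j, evP (l i) (![A, B, C] j) = if i = j then 1 else 0) ∧
      ∀ i, ∀ x ∈ triangle A B C, 0 ≤ evP (l i) x := by
  have htop : affineSpan ℝ (Set.range ![A, B, C]) = ⊤ :=
    hK.affineSpan_eq_top_iff_card_eq_finrank_add_one.2 (by simp)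
  refine ⟨?_, ?_⟩
  · rw [triangle, interior_convexHull_nonempty_iff_affineSpan_eq_top, ← range_vertices, htop]
  · let b : AffineBasis (Fin 3) ℝ (ℝ × ℝ) := ⟨![A, B, C], hK, htop⟩
    choose l hl hlb using fun i => exists_polynomial_of_affineMap (b.coord i)
    refine ⟨l, hl, fun i j => ?_, fun i x hx => ?_⟩
    · rw [hlb]
      exact b.coord_apply i j
    · rw [hlb]
      have hxb : x ∈ convexHull ℝ (Set.range b) := by
        change x ∈ convexHull ℝ (Set.range ![A, B, C])
        rwa [range_vertices]
      rw [b.convexHull_eq_nonneg_coord] at hxb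
      exact hxb i

/-! ### The functionals defining `N(K)` and their pairing with the stings -/

/-- The values at the three vertices together with the integral over the triangle. -/
noncomputable def vertexMean (A B C : ℝ × ℝ) :
    MvPolynomial (Fin 2) ℝ →ₗ[ℝ] (Fin 3 → ℝ) × ℝ where
  toFun q := (fun i => evP q (![A, B, C] i), ∫ x in triangle A B C, evP q x)
  map_add' p q := by
    ext i
    · simp [evP_add]
    · simp only [evP_add, Prod.snd_add]
      exact integral_add (integrableOn_evP A B C p) (integrableOn_evP A B C q)
  map_smul' c q := by
    ext i
    · simp [evP_smul]
    · simp only [evP_smul, Prod.smul_snd, smul_eq_mul, RingHom.id_apply]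
      exact integral_const_mul c _

lemma memN_iff (A B C : ℝ × ℝ) (q : MvPolynomial (Fin 2) ℝ) :
    memN A B C q ↔ q.totalDegree ≤ 3 ∧ vertexMean A B C q = 0 := by
  simp [memN, vertexMean, Prod.ext_iff, _root_.funext_iff, triangle]

/-- The polynomial `∑ aᵢ sᵢ + c` attached to formal coefficients `(a, c)`. -/
noncomputable def stingComb (s : Fin 3 → MvPolynomial (Fin 2) ℝ) :
    (Fin 3 → ℝ) × ℝ →ₗ[ℝ] MvPolynomial (Fin 2) ℝ where
  toFun x := ∑ i, MvPolynomial.C (x.1 i) * s i + MvPolynomial.C x.2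
  map_add' x y := by
    simp only [Prod.fst_add, Pi.add_apply, map_add, add_mul, Finset.sum_add_distrib, Prod.snd_add]
    ring
  map_smul' c x := by
    simp [smul_eq_C_mul, Finset.mul_sum, mul_assoc]

lemma evP_stingComb (s : Fin 3 → MvPolynomial (Fin 2) ℝ) (x : (Fin 3 → ℝ) × ℝ) (p : ℝ × ℝ) :
    evP (stingComb s x) p = ∑ i, x.1 i * evP (s i) p + x.2 := by
  simp [stingComb, evP_add, evP_sum, evP_mul, evP_C]

lemma totalDegree_stingComb_le {s : Fin 3 → MvPolynomial (Fin 2) ℝ}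
    (hdeg : ∀ i, (s i).totalDegree ≤ 3) (x : (Fin 3 → ℝ) × ℝ) :
    (stingComb s x).totalDegree ≤ 3 := by
  refine (totalDegree_add _ _).trans (max_le ?_ (by simp))
  refine totalDegree_finsetSum_le fun i _ => (totalDegree_mul _ _).trans ?_
  simpa using hdeg i

/-- The integral of `q (∑ aᵢ sᵢ + c)` depends only on the four functionals defining `N(K)`. -/
lemma integral_mul_stingComb {A B C : ℝ × ℝ} {s : Fin 3 → MvPolynomial (Fin 2) ℝ}
    (hquad : ∀ i, ∀ q : MvPolynomial (Fin 2) ℝ, q.totalDegree ≤ 3 →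
      ∫ p in triangle A B C, evP (s i) p * evP q p =
        (volume (triangle A B C)).toReal / 100 * evP q (![A, B, C] i))
    {q : MvPolynomial (Fin 2) ℝ} (hq : q.totalDegree ≤ 3) (x : (Fin 3 → ℝ) × ℝ) :
    ∫ p in triangle A B C, evP q p * (∑ i, x.1 i * evP (s i) p + x.2) =
      ∑ i, x.1 i * ((volume (triangle A B C)).toReal / 100 * (vertexMean A B C q).1 i)
        + x.2 * (vertexMean A B C q).2 := by
  have hi : ∀ i, IntegrableOn (fun p => x.1 i * (evP (s i) p * evP q p)) (triangle A B C) := by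
    intro i
    have := (integrableOn_evP A B C (s i * q)).const_mul (x.1 i)
    simpa only [evP_mul, IntegrableOn] using this
  have he : ∀ p, evP q p * (∑ i, x.1 i * evP (s i) p + x.2) =
      ∑ i, x.1 i * (evP (s i) p * evP q p) + x.2 * evP q p := by
    intro p
    rw [mul_add, Finset.mul_sum]
    congr 1
    · exact Finset.sum_congr rfl fun i _ => by ring
    · ring
  simp_rw [he]
  rw [integral_add (integrable_finsetSum _ fun i _ => hi i)
    ((integrableOn_evP A B C q).const_mul x.2), integral_finsetSum _ fun i _ => hi i]
  simp_rw [integral_const_mul, hquad _ q hq]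
  rfl

lemma bijective_vertexMean_comp {A B C : ℝ × ℝ} (hK : AffineIndependent ℝ ![A, B, C])
    {s : Fin 3 → MvPolynomial (Fin 2) ℝ} (hdeg : ∀ i, (s i).totalDegree ≤ 3)
    (hquad : ∀ i, ∀ q : MvPolynomial (Fin 2) ℝ, q.totalDegree ≤ 3 →
      ∫ p in triangle A B C, evP (s i) p * evP q p =
        (volume (triangle A B C)).toReal / 100 * evP q (![A, B, C] i)) :
    Function.Bijective (vertexMean A B C ∘ₗ stingComb s) ∧
      Function.Injective (stingComb s) := by
  obtain ⟨hint, l, hl, hlv, hlpos⟩ := exists_barycentric hK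
  have hcpt := isCompact_triangle A B C
  have hvol : (volume (triangle A B C)).toReal ≠ 0 := by
    refine (ENNReal.toReal_pos ?_ hcpt.measure_lt_top.ne).ne'
    exact (Measure.measure_pos_of_nonempty_interior _ hint).ne'
  have hl0 : ∀ i, l i ≠ 0 := by
    intro i h
    have := hlv i i
    simp [h, evP] at this
  have hbdeg : (l 0 * l 1 * l 2).totalDegree ≤ 3 := by
    have h1 := totalDegree_mul (l 0 * l 1) (l 2)
    have h2 := totalDegree_mul (l 0) (l 1)
    have := hl 0
    have := hl 1
    have := hl 2
    omega
  have hbint : (vertexMean A B C (l 0 * l 1 * l 2)).2 ≠ 0 := by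
    intro h
    have := eq_zero_of_setIntegral_eq_zero hcpt hint (fun x hx => ?_) h
    · exact mul_ne_zero (mul_ne_zero (hl0 0) (hl0 1)) (hl0 2) this
    · rw [evP_mul, evP_mul]
      exact mul_nonneg (mul_nonneg (hlpos 0 x hx) (hlpos 1 x hx)) (hlpos 2 x hx)
  have hbv : ∀ i, (vertexMean A B C (l 0 * l 1 * l 2)).1 i = 0 := by
    intro i
    change evP _ (![A, B, C] i) = 0
    rw [evP_mul, evP_mul, hlv, hlv, hlv]
    fin_cases i <;> simp
  have hinj : Function.Injective (stingComb s) := by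
    rw [injective_iff_map_eq_zero]
    intro x hx
    have hev : ∀ p, ∑ i, x.1 i * evP (s i) p + x.2 = 0 := by
      intro p
      rw [← evP_stingComb, hx]
      simp [evP]
    have hc : x.2 = 0 := by
      have := integral_mul_stingComb hquad hbdeg x
      simp only [hev, hbv] at this
      simpa [hbint] using this
    ext j
    · have := integral_mul_stingComb hquad ((hl j).trans (by norm_num)) x
      have hlj : ∀ i, (vertexMean A B C (l j)).1 i = if j = i then 1 else 0 := hlv j
      simp only [hev, hlj] at this
      simpa [hc, hvol] using this
    · exact hc
  have hinj' : Function.Injective (vertexMean A B C ∘ₗ stingComb s) := by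
    rw [injective_iff_map_eq_zero]
    intro x hx
    -- `w = stingComb s x` is killed by the four functionals, hence orthogonal to itself.
    have hsq := integral_mul_stingComb hquad (totalDegree_stingComb_le hdeg x) x
    rw [LinearMap.comp_apply] at hx
    simp_rw [← evP_stingComb, ← evP_mul, hx] at hsq
    have h0 := eq_zero_of_setIntegral_eq_zero hcpt hint
      (q := stingComb s x * stingComb s x) (fun p _ => by rw [evP_mul]; exact mul_self_nonneg _)
      (by simpa using hsq)
    exact hinj ((mul_self_eq_zero.1 h0).trans (map_zero _).symm)
  exact ⟨⟨hinj', LinearMap.injective_iff_surjective.1 hinj'⟩, hinj⟩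

/-! ### Dimensions -/

lemma finrank_cubics :
    Module.finrank ℝ (MvPolynomial.restrictTotalDegree (Fin 2) ℝ 3) = 10 := by
  rw [restrictTotalDegree, Module.finrank_eq_nat_card_basis (basisRestrictSupport ℝ _)]
  let e : {n : Fin 2 →₀ ℕ | (n.sum fun _ e => e) ≤ 3} ≃
      {n : Fin 4 × Fin 4 // n.1.val + n.2.val ≤ 3} :=
    { toFun := fun n =>
        have h : n.1 0 + n.1 1 ≤ 3 := by
          have := n.2
          rw [Set.mem_ofPred_eq, Finsupp.sum_fintype _ _ (fun _ => rfl), Fin.sum_univ_two] at this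
          exact this
        ⟨(⟨n.1 0, by omega⟩, ⟨n.1 1, by omega⟩), h⟩
      invFun := fun m => ⟨Finsupp.equivFunOnFinite.symm ![m.1.1, m.1.2], by
        rw [Set.mem_ofPred_eq, Finsupp.sum_fintype _ _ (fun _ => rfl), Fin.sum_univ_two]
        exact m.2⟩
      left_inv := fun n => by
        ext i
        fin_cases i <;> rfl
      right_inv := fun m => rfl }
  rw [Nat.card_congr e, Nat.card_eq_fintype_card]
  decide

/-- Rank-nullity, as a basis: if `f` maps the subspace `P` onto `W`, the kernel of `f` in `P` has
a basis with `dim P - dim W` elements. -/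
lemma exists_basis_of_surjOn {V W : Type*} [AddCommGroup V] [Module ℝ V] [AddCommGroup W]
    [Module ℝ W] (P : Submodule ℝ V) [FiniteDimensional ℝ P] (f : V →ₗ[ℝ] W) {k : ℕ}
    (hdim : Module.finrank ℝ P = Module.finrank ℝ W + k) (hf : ∀ y, ∃ x ∈ P, f x = y) :
    ∃ nb : Fin k → V, (∀ j, nb j ∈ P ∧ f (nb j) = 0) ∧ LinearIndependent ℝ nb ∧
      ∀ n ∈ P, f n = 0 → ∃ d : Fin k → ℝ, n = ∑ j, d j • nb j := by
  have hrange : LinearMap.range (f ∘ₗ P.subtype) = ⊤ := by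
    rw [LinearMap.range_eq_top]
    intro y
    obtain ⟨x, hx, hxy⟩ := hf y
    exact ⟨⟨x, hx⟩, hxy⟩
  have hker : Module.finrank ℝ (LinearMap.ker (f ∘ₗ P.subtype)) = k := by
    have h := (f ∘ₗ P.subtype).finrank_range_add_finrank_ker
    rw [hrange, finrank_top, hdim] at h
    omega
  let b := Module.finBasisOfFinrankEq ℝ (LinearMap.ker (f ∘ₗ P.subtype)) hker
  let g : LinearMap.ker (f ∘ₗ P.subtype) →ₗ[ℝ] V :=
    P.subtype ∘ₗ (LinearMap.ker (f ∘ₗ P.subtype)).subtype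
  have hg : LinearMap.ker g = ⊥ :=
    LinearMap.ker_eq_bot.2 (Subtype.val_injective.comp Subtype.val_injective)
  refine ⟨fun j => g (b j), fun j => ⟨(b j).1.2, (b j).2⟩, b.linearIndependent.map' g hg,
    fun n hn hfn => ?_⟩
  let m : LinearMap.ker (f ∘ₗ P.subtype) := ⟨⟨n, hn⟩, hfn⟩
  refine ⟨fun j => b.repr m j, ?_⟩
  have h := congrArg g (b.sum_repr m)
  rw [map_sum] at h
  simp_rw [map_smul] at h
  exact h.symm

/-- Orthogonal decomposition P³ = N(K) ⊕ (S(K) ⊕ C(K)) with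
    dim N(K) = 6, dim S(K) = 3, dim C(K) = 1, dim P³ = 10. -/
theorem stmt9 (A B C : ℝ × ℝ) (hK : AffineIndependent ℝ ![A, B, C])
    (s : Fin 3 → MvPolynomial (Fin 2) ℝ)
    (hdeg : ∀ i, (s i).totalDegree ≤ 3)
    (hquad : ∀ i, ∀ q : MvPolynomial (Fin 2) ℝ, q.totalDegree ≤ 3 →
      ∫ p in convexHull ℝ ({A, B, C} : Set (ℝ × ℝ)), evP (s i) p * evP q p =
        (volume (convexHull ℝ ({A, B, C} : Set (ℝ × ℝ)))).toReal / 100 *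
          evP q (![A, B, C] i)) :
    -- direct sum decomposition: existence and uniqueness
    (∀ q : MvPolynomial (Fin 2) ℝ, q.totalDegree ≤ 3 →
      ∃! x : MvPolynomial (Fin 2) ℝ × (Fin 3 → ℝ) × ℝ,
        memN A B C x.1 ∧
        q = x.1 + ∑ i, MvPolynomial.C (x.2.1 i) * s i + MvPolynomial.C x.2.2) ∧
    -- L²(K)-orthogonality of N(K) to S(K) ⊕ C(K)
    (∀ n : MvPolynomial (Fin 2) ℝ, memN A B C n → ∀ (a : Fin 3 → ℝ) (c : ℝ),
      ∫ p in convexHull ℝ ({A, B, C} : Set (ℝ × ℝ)),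
        evP n p * (∑ i, a i * evP (s i) p + c) = 0) ∧
    -- dim N(K) = 6
    (∃ nb : Fin 6 → MvPolynomial (Fin 2) ℝ,
      (∀ j, memN A B C (nb j)) ∧ LinearIndependent ℝ nb ∧
      ∀ n : MvPolynomial (Fin 2) ℝ, memN A B C n →
        ∃ d : Fin 6 → ℝ, n = ∑ j, d j • nb j) ∧
    -- dim S(K) = 3
    LinearIndependent ℝ s ∧
    -- dim C(K) = 1
    Module.finrank ℝ (Submodule.span ℝ ({(1 : MvPolynomial (Fin 2) ℝ)} :
      Set (MvPolynomial (Fin 2) ℝ))) = 1 ∧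
    -- dim P³ = 10
    Module.finrank ℝ (MvPolynomial.restrictTotalDegree (Fin 2) ℝ 3) = 10 := by
  obtain ⟨hbij, hinj⟩ := bijective_vertexMean_comp hK hdeg hquad
  have hsub : ∀ {p q : MvPolynomial (Fin 2) ℝ}, p.totalDegree ≤ 3 → q.totalDegree ≤ 3 →
      (p - q).totalDegree ≤ 3 := fun hp hq => (totalDegree_sub _ _).trans (max_le hp hq)
  refine ⟨fun q hq => ?_, fun n hn a c => ?_, ?_, ?_, ?_, finrank_cubics⟩
  · obtain ⟨x, hx⟩ := hbij.2 (vertexMean A B C q)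
    rw [LinearMap.comp_apply] at hx
    refine ⟨(q - stingComb s x, x), ⟨?_, ?_⟩, ?_⟩
    · rw [memN_iff, map_sub, hx, sub_self]
      exact ⟨hsub hq (totalDegree_stingComb_le hdeg x), rfl⟩
    · rw [add_assoc]
      exact (sub_add_cancel q (stingComb s x)).symm
    · rintro ⟨n, y⟩ ⟨hn, hy⟩
      rw [add_assoc] at hy
      change q = n + stingComb s y at hy
      have hyx : y = x := by
        apply hbij.1
        rw [LinearMap.comp_apply, LinearMap.comp_apply, hx, hy, map_add,
          ((memN_iff A B C n).1 hn).2, zero_add]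
      subst hyx
      rw [hy, add_sub_cancel_right]
  · rw [memN_iff] at hn
    have := integral_mul_stingComb hquad hn.1 (a, c)
    rw [hn.2] at this
    simpa using this
  · obtain ⟨nb, h1, h2, h3⟩ := exists_basis_of_surjOn (restrictTotalDegree (Fin 2) ℝ 3)
      (vertexMean A B C) (k := 6) (by rw [finrank_cubics]; simp) fun y => by
        obtain ⟨x, hx⟩ := hbij.2 y
        exact ⟨stingComb s x,
          (mem_restrictTotalDegree _ _ _).2 (totalDegree_stingComb_le hdeg x), hx⟩
    simp only [mem_restrictTotalDegree, ← memN_iff] at h1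
    refine ⟨nb, h1, h2, fun n hn => ?_⟩
    rw [memN_iff] at hn
    exact h3 n ((mem_restrictTotalDegree _ _ _).2 hn.1) hn.2
  · rw [Fintype.linearIndependent_iff]
    intro a ha
    have h0 : stingComb s (a, 0) = 0 := by
      simpa [stingComb, smul_eq_C_mul] using ha
    have h1 := hinj (h0.trans (map_zero _).symm)
    exact fun i => congrFun (congrArg Prod.fst h1) i
  · exact finrank_span_singleton one_ne_zero
end

section
/- On a nondegenerate triangle K there is a constant C > 0 (depending only on the shape of K, invariant under scaling) such that every pair v of degree-≤4 polynomials vanishing on ∂K satisfies |v|_{H^1(K)} ≤ C ||div v||_{L^2(K)}. -/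
/-!
A quartic vanishing on the boundary of a triangle is the cubic bubble `b = λ_A λ_B λ_C` times an
affine function (`eq_bubP_of_vanish`, obtained by an affine change of variables from the reference
triangle, where it is a comparison of coefficients). So `v = b q` with `q` an affine vector field,
and `v` is parametrized by six real coefficients.

The divergence is injective on such fields. On the edge `λ_i = 0` it equals the normal component of
`q`, up to a factor that is nonzero inside the edge. If `div v = 0`, the affine field `q` is thus
tangent to all three edges, so it vanishes at the three vertices and hence identically
(`coeff_eq_zero_of_div`). Therefore the squared `L²` norm of the divergence is a positive definite
quadratic form in the six coefficients, and compactness of the unit sphere bounds the squared `H¹`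
seminorm by a multiple of it (`exists_le_mul_of_homogeneous`, `exists_bound`).

On `t • K` the bubble field with the same coefficients has first derivatives scaled by `t⁻¹`
(`evP_pderiv_smul`), and the Jacobian `t ^ 2` compensates this in both integrals
(`setIntegral_smul_eq`), so one constant serves all `t`.
-/

open MeasureTheory

/-! ### Bubble multiples and their gradients -/

open MvPolynomial in
/-- The affine polynomial `a + b x + c y`. -/
noncomputable def affP (a b c : ℝ) : MvPolynomial (Fin 2) ℝ := C a + C b * X 0 + C c * X 1

open MvPolynomial in
/-- The product of the bubble `l m (1 - l - m)` with `α + β l + γ m`. For `l`, `m` two barycentric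
coordinates of a triangle, this is the general quartic vanishing on its boundary. -/
noncomputable def bubP (l m : MvPolynomial (Fin 2) ℝ) (α β γ : ℝ) : MvPolynomial (Fin 2) ℝ :=
  l * m * (1 - l - m) * (C α + C β * l + C γ * m)

/-- The directional derivative of `bubP` at a point where `l = L` and `m = M`, in a direction along
which `l` and `m` have derivatives `lx` and `mx`. -/
def dBub (L M lx mx α β γ : ℝ) : ℝ :=
  (lx * M * (1 - L - M) + L * mx * (1 - L - M) - L * M * (lx + mx)) * (α + β * L + γ * M) +
    L * M * (1 - L - M) * (β * lx + γ * mx)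

lemma evP_affP (a b c : ℝ) (p : ℝ × ℝ) : evP (affP a b c) p = a + b * p.1 + c * p.2 := by
  simp [evP, affP]

lemma evP_bubP (l m : MvPolynomial (Fin 2) ℝ) (α β γ : ℝ) (p : ℝ × ℝ) :
    evP (bubP l m α β γ) p =
      evP l p * evP m p * (1 - evP l p - evP m p) * (α + β * evP l p + γ * evP m p) := by
  simp [evP, bubP]

lemma evP_pderiv_bubP_zero (a b c a' b' c' α β γ : ℝ) (p : ℝ × ℝ) :
    evP (MvPolynomial.pderiv 0 (bubP (affP a b c) (affP a' b' c') α β γ)) p =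
      dBub (a + b * p.1 + c * p.2) (a' + b' * p.1 + c' * p.2) b b' α β γ := by
  simp [evP, bubP, affP, dBub, MvPolynomial.pderiv_X, Derivation.leibniz]
  ring

lemma evP_pderiv_bubP_one (a b c a' b' c' α β γ : ℝ) (p : ℝ × ℝ) :
    evP (MvPolynomial.pderiv 1 (bubP (affP a b c) (affP a' b' c') α β γ)) p =
      dBub (a + b * p.1 + c * p.2) (a' + b' * p.1 + c' * p.2) c c' α β γ := by
  simp [evP, bubP, affP, dBub, MvPolynomial.pderiv_X, Derivation.leibniz]
  ring

/-! ### Quartics vanishing on the boundary of a triangle -/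

/-- Coefficients of a quartic in the monomials `x ^ i * y ^ j`. -/
lemma exists_coeff_evP (P : MvPolynomial (Fin 2) ℝ) (hP : P.totalDegree ≤ 4) :
    ∃ c : ℕ → ℕ → ℝ, (∀ i j, 4 < i + j → c i j = 0) ∧
      ∀ p : ℝ × ℝ, evP P p = ∑ i ∈ Finset.range 5, ∑ j ∈ Finset.range 5,
        c i j * (p.1 ^ i * p.2 ^ j) := by
  let e : ℕ × ℕ → (Fin 2 →₀ ℕ) := fun ij => Finsupp.single 0 ij.1 + Finsupp.single 1 ij.2
  have e0 : ∀ ij, e ij 0 = ij.1 := fun ij => by simp [e]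
  have e1 : ∀ ij, e ij 1 = ij.2 := fun ij => by simp [e]
  have key : ∀ d ∈ P.support, d 0 + d 1 ≤ 4 := fun d hd => by
    have h := (MvPolynomial.le_totalDegree hd).trans hP
    rwa [Finsupp.sum_fintype _ _ (fun _ => rfl), Fin.sum_univ_two] at h
  refine ⟨fun i j => P.coeff (e (i, j)), fun i j hij => ?_, fun p => ?_⟩
  · by_contra h
    have := key _ (MvPolynomial.mem_support_iff.2 h)
    rw [e0, e1] at this
    omega
  · rw [← Finset.sum_product', evP, MvPolynomial.eval_eq']
    have hinj : Set.InjOn e (Finset.range 5 ×ˢ Finset.range 5 : Finset (ℕ × ℕ)) := by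
      intro a _ b _ h
      ext
      · rw [← e0, h, e0]
      · rw [← e1, h, e1]
    have hsub : P.support ⊆ (Finset.range 5 ×ˢ Finset.range 5).image e := by
      intro d hd
      have := key d hd
      refine Finset.mem_image.2 ⟨(d 0, d 1), by simp; omega, ?_⟩
      ext i
      fin_cases i
      · exact e0 _
      · exact e1 _
    rw [Finset.sum_subset hsub (fun d _ hd => by
      rw [MvPolynomial.notMem_support_iff.1 hd, zero_mul]), Finset.sum_image hinj]
    refine Finset.sum_congr rfl fun ij _ => ?_
    rw [Fin.prod_univ_two, e0, e1]
    simp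

/-- On the reference triangle with vertices `(0,0)`, `(1,0)`, `(0,1)`, a quartic vanishing on the
boundary is the cubic bubble times an affine function. -/
lemma eq_bubble_of_reference (P : MvPolynomial (Fin 2) ℝ) (hP : P.totalDegree ≤ 4)
    (h0 : ∀ s : ℝ, 0 ≤ s → s ≤ 1 → evP P (0, s) = 0)
    (h1 : ∀ s : ℝ, 0 ≤ s → s ≤ 1 → evP P (s, 0) = 0)
    (h2 : ∀ s : ℝ, 0 ≤ s → s ≤ 1 → evP P (s, 1 - s) = 0) :
    ∃ α β γ : ℝ, ∀ x y : ℝ,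
      evP P (x, y) = x * y * (1 - x - y) * (α + β * x + γ * y) := by
  obtain ⟨c, hc, hev⟩ := exists_coeff_evP P hP
  have hx : ∀ x y : ℝ, evP P (x, y) =
      c 0 0 + c 0 1 * y + c 0 2 * y ^ 2 + c 0 3 * y ^ 3 + c 0 4 * y ^ 4 +
      c 1 0 * x + c 1 1 * x * y + c 1 2 * x * y ^ 2 + c 1 3 * x * y ^ 3 +
      c 2 0 * x ^ 2 + c 2 1 * x ^ 2 * y + c 2 2 * x ^ 2 * y ^ 2 +
      c 3 0 * x ^ 3 + c 3 1 * x ^ 3 * y + c 4 0 * x ^ 4 := fun x y => by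
    rw [hev]
    simp only [Finset.sum_range_succ, Finset.sum_range_zero]
    rw [hc 1 4, hc 2 3, hc 2 4, hc 3 2, hc 3 3, hc 3 4, hc 4 1, hc 4 2, hc 4 3, hc 4 4] <;> try norm_num
    ring
  simp only [hx] at h0 h1 h2
  -- five points on each leg kill the coefficients of pure powers; three interior points of the
  -- hypotenuse then determine the remaining six coefficients up to three parameters
  have a0 := h0 0 (by norm_num) (by norm_num)
  have a1 := h0 (1/4) (by norm_num) (by norm_num)
  have a2 := h0 (1/2) (by norm_num) (by norm_num)
  have a3 := h0 (3/4) (by norm_num) (by norm_num)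
  have a4 := h0 1 (by norm_num) (by norm_num)
  have b1 := h1 (1/4) (by norm_num) (by norm_num)
  have b2 := h1 (1/2) (by norm_num) (by norm_num)
  have b3 := h1 (3/4) (by norm_num) (by norm_num)
  have b4 := h1 1 (by norm_num) (by norm_num)
  have d1 := h2 (1/4) (by norm_num) (by norm_num)
  have d2 := h2 (1/2) (by norm_num) (by norm_num)
  have d3 := h2 (3/4) (by norm_num) (by norm_num)
  norm_num at a0 a1 a2 a3 a4 b1 b2 b3 b4 d1 d2 d3
  have z01 : c 0 1 = 0 := by linarith
  have z02 : c 0 2 = 0 := by linarith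
  have z03 : c 0 3 = 0 := by linarith
  have z04 : c 0 4 = 0 := by linarith
  have z10 : c 1 0 = 0 := by linarith
  have z20 : c 2 0 = 0 := by linarith
  have z30 : c 3 0 = 0 := by linarith
  have z40 : c 4 0 = 0 := by linarith
  rw [a0, z01, z02, z03, z04, z10, z20, z30, z40] at d1 d2 d3
  have e12 : c 1 2 = - c 1 1 - c 1 3 := by linarith
  have e21 : c 2 1 = - c 1 1 - c 3 1 := by linarith
  have e22 : c 2 2 = c 1 3 + c 3 1 := by linarith
  refine ⟨c 1 1, - c 3 1, - c 1 3, fun x y => ?_⟩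
  rw [hx, a0, z01, z02, z03, z04, z10, z20, z30, z40, e12, e21, e22]
  ring

lemma totalDegree_affP_le (a b c : ℝ) : (affP a b c).totalDegree ≤ 1 := by
  unfold affP
  refine (MvPolynomial.totalDegree_add _ _).trans (max_le
    ((MvPolynomial.totalDegree_add _ _).trans (max_le ?_ ?_)) ?_)
  · simp
  all_goals
    refine (MvPolynomial.totalDegree_mul _ _).trans ?_
    simp

/-- Substituting affine polynomials does not raise the degree. -/
lemma totalDegree_aeval_le (P : MvPolynomial (Fin 2) ℝ) (f : Fin 2 → MvPolynomial (Fin 2) ℝ)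
    (hf : ∀ i, (f i).totalDegree ≤ 1) :
    (MvPolynomial.aeval f P).totalDegree ≤ P.totalDegree := by
  rw [MvPolynomial.aeval_def, MvPolynomial.eval₂_eq']
  refine MvPolynomial.totalDegree_finsetSum_le fun d hd => ?_
  refine le_trans ?_ (MvPolynomial.le_totalDegree hd)
  rw [Finsupp.sum_fintype _ _ (fun _ => rfl)]
  refine (MvPolynomial.totalDegree_mul _ _).trans ?_
  rw [MvPolynomial.algebraMap_eq, MvPolynomial.totalDegree_C, zero_add]
  refine (MvPolynomial.totalDegree_finsetProd _ _).trans (Finset.sum_le_sum fun i _ => ?_)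
  refine (MvPolynomial.totalDegree_pow _ _).trans ?_
  simpa using Nat.mul_le_mul_left (d i) (hf i)

/-- Twice the signed area of the triangle `A B C`. -/
def det3 (A B C : ℝ × ℝ) : ℝ :=
  (B.1 - A.1) * (C.2 - A.2) - (B.2 - A.2) * (C.1 - A.1)

/-- The barycentric coordinate of the triangle `A B C` attached to the vertex `B`; the one attached
to `C` is `baryP A C B`. -/
noncomputable def baryP (A B C : ℝ × ℝ) : MvPolynomial (Fin 2) ℝ :=
  affP ((-A.1 * (C.2 - A.2) + A.2 * (C.1 - A.1)) / det3 A B C)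
    ((C.2 - A.2) / det3 A B C) (-(C.1 - A.1) / det3 A B C)

/-- A quartic vanishing on the boundary of a nondegenerate triangle is the cubic bubble times an
affine function: transport the statement from the reference triangle. -/
lemma eq_bubP_of_vanish (A B C : ℝ × ℝ) (hD : det3 A B C ≠ 0) (v : MvPolynomial (Fin 2) ℝ)
    (hv : v.totalDegree ≤ 4)
    (h : ∀ p ∈ segment ℝ A B ∪ segment ℝ B C ∪ segment ℝ C A, evP v p = 0) :
    ∃ α β γ : ℝ, v = bubP (baryP A B C) (baryP A C B) α β γ := by
  let f : Fin 2 → MvPolynomial (Fin 2) ℝ :=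
    ![affP A.1 (B.1 - A.1) (C.1 - A.1), affP A.2 (B.2 - A.2) (C.2 - A.2)]
  have hf : ∀ i, (f i).totalDegree ≤ 1 := by
    intro i
    fin_cases i <;> exact totalDegree_affP_le _ _ _
  have hev : ∀ x y : ℝ, evP (MvPolynomial.aeval f v) (x, y) =
      evP v (A.1 + (B.1 - A.1) * x + (C.1 - A.1) * y, A.2 + (B.2 - A.2) * x + (C.2 - A.2) * y) := by
    intro x y
    have := evP_affP
    simp only [evP] at this ⊢
    rw [MvPolynomial.aeval_def, MvPolynomial.algebraMap_eq]
    change (MvPolynomial.eval _) (MvPolynomial.bind₁ f v) = _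
    rw [← MvPolynomial.coe_aeval_eq_eval]
    change MvPolynomial.aeval _ (MvPolynomial.bind₁ f v) = _
    rw [MvPolynomial.aeval_bind₁, ← MvPolynomial.coe_aeval_eq_eval]
    change _ = MvPolynomial.aeval _ v
    congr 2
    funext i
    fin_cases i <;> simp [f, affP]
  have hP := (totalDegree_aeval_le v f hf).trans hv
  obtain ⟨α, β, γ, hq⟩ := eq_bubble_of_reference (MvPolynomial.aeval f v) hP
    (fun s hs hs' => by
      rw [hev]
      refine h _ (Or.inr ⟨s, 1 - s, hs, by linarith, by ring, ?_⟩)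
      ext <;> simp <;> ring)
    (fun s hs hs' => by
      rw [hev]
      refine h _ (Or.inl (Or.inl ⟨1 - s, s, by linarith, hs, by ring, ?_⟩))
      ext <;> simp <;> ring)
    (fun s hs hs' => by
      rw [hev]
      refine h _ (Or.inl (Or.inr ⟨s, 1 - s, hs, by linarith, by ring, ?_⟩))
      ext <;> simp <;> ring)
  refine ⟨α, β, γ, MvPolynomial.funext fun z => ?_⟩
  have hz : z = ![(z 0, z 1).1, (z 0, z 1).2] := by
    funext i
    fin_cases i <;> rfl
  have hD' : det3 A C B = - det3 A B C := by simp only [det3]; ring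
  rw [hz]
  change evP v (z 0, z 1) = evP _ (z 0, z 1)
  rw [evP_bubP, ← hq, hev]
  congr 1
  simp only [baryP, evP_affP, hD']
  ext
  · field_simp
    simp only [det3]
    ring
  · field_simp
    simp only [det3]
    ring

/-! ### Scaling of gradients -/

/-- The gradient of a bubble-multiple on the scaled triangle `t • A B C` is `1 / t` times that on
`A B C` with the same coefficients. -/
lemma evP_pderiv_smul (A B C : ℝ × ℝ) (t : ℝ) (ht : t ≠ 0) (i : Fin 2)
    (α β γ : ℝ) (p : ℝ × ℝ) :
    evP (MvPolynomial.pderiv i (bubP (baryP (t • A) (t • B) (t • C))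
      (baryP (t • A) (t • C) (t • B)) α β γ)) (t • p) =
    t⁻¹ * evP (MvPolynomial.pderiv i (bubP (baryP A B C) (baryP A C B) α β γ)) p := by
  have hd : ∀ B C : ℝ × ℝ, det3 (t • A) (t • B) (t • C) = t ^ 2 * det3 A B C := fun B C => by
    simp only [det3, Prod.smul_fst, Prod.smul_snd, smul_eq_mul]; ring
  have hd' : ∀ B C : ℝ × ℝ, baryP (t • A) (t • B) (t • C) =
      affP ((-A.1 * (C.2 - A.2) + A.2 * (C.1 - A.1)) / det3 A B C)
        (t⁻¹ * ((C.2 - A.2) / det3 A B C)) (t⁻¹ * (-(C.1 - A.1) / det3 A B C)) := fun B C => by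
    rw [baryP, hd]
    simp only [Prod.smul_fst, Prod.smul_snd, smul_eq_mul]
    by_cases h0 : det3 A B C = 0
    · simp [h0]
    · congr 1 <;> field_simp
  have hl : ∀ a b c : ℝ, a + t⁻¹ * b * (t * p.1) + t⁻¹ * c * (t * p.2) = a + b * p.1 + c * p.2 :=
    fun a b c => by field_simp
  have hb : ∀ L M lx mx : ℝ, dBub L M (t⁻¹ * lx) (t⁻¹ * mx) α β γ = t⁻¹ * dBub L M lx mx α β γ :=
    fun L M lx mx => by simp only [dBub]; ring
  rw [hd', hd']
  fin_cases i
  · simp only [Fin.zero_eta, baryP, evP_pderiv_bubP_zero, Prod.smul_fst, Prod.smul_snd,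
      smul_eq_mul, hl, hb]
  · simp only [Fin.mk_one, baryP, evP_pderiv_bubP_one, Prod.smul_fst, Prod.smul_snd,
      smul_eq_mul, hl, hb]

/-- If the determinant vanished, its cofactors would give nontrivial affine dependencies. -/
lemma det3_ne_zero (A B C : ℝ × ℝ) (hK : AffineIndependent ℝ ![A, B, C]) : det3 A B C ≠ 0 := by
  intro h0
  have key : ∀ u v w : ℝ, u + v + w = 0 → u • A + v • B + w • C = 0 → u = 0 ∧ v = 0 ∧ w = 0 := by
    intro u v w hs hc
    have := (affineIndependent_iff.1 hK) Finset.univ ![u, v, w]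
      (by simpa [Fin.sum_univ_three] using hs) (by simpa [Fin.sum_univ_three] using hc)
    exact ⟨this 0 (by simp), this 1 (by simp), this 2 (by simp)⟩
  unfold det3 at h0
  have k1 := key (-(C.2 - A.2) + (B.2 - A.2)) (C.2 - A.2) (-(B.2 - A.2)) (by ring)
    (by ext <;> simp <;> linarith)
  have k2 := key (-(C.1 - A.1) + (B.1 - A.1)) (C.1 - A.1) (-(B.1 - A.1)) (by ring)
    (by ext <;> simp <;> linarith)
  have k3 := key 1 (-1) 0 (by ring) (by ext <;> simp <;> linarith [k1.2.2, k2.2.2])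
  exact one_ne_zero k3.1

/-! ### Comparison of homogeneous functions -/

/-- Two continuous functions homogeneous of degree two on a finite-dimensional space, the second one
positive definite, are comparable, by compactness of the unit sphere. -/
lemma exists_le_mul_of_homogeneous {E : Type*} [NormedAddCommGroup E] [NormedSpace ℝ E]
    [FiniteDimensional ℝ E] (f g : E → ℝ) (hf : Continuous f) (hg : Continuous g)
    (hf2 : ∀ (s : ℝ) x, f (s • x) = s ^ 2 * f x) (hg2 : ∀ (s : ℝ) x, g (s • x) = s ^ 2 * g x)
    (hpos : ∀ x, x ≠ 0 → 0 < g x) :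
    ∃ k : ℝ, 0 < k ∧ ∀ x, f x ≤ k ^ 2 * g x := by
  have hne : ∀ x ∈ Metric.sphere (0 : E) 1, x ≠ 0 := fun x hx =>
    ne_zero_of_mem_unit_sphere ⟨x, hx⟩
  obtain ⟨M, hM⟩ := (isCompact_sphere (0 : E) 1).exists_bound_of_continuousOn
    (f := fun x => f x / g x)
    (hf.continuousOn.div hg.continuousOn fun x hx => (hpos x (hne x hx)).ne')
  refine ⟨Real.sqrt (|M| + 1), by positivity, fun x => ?_⟩
  rw [Real.sq_sqrt (by positivity)]
  rcases eq_or_ne x 0 with rfl | hx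
  · have h1 := hf2 0 0
    have h2 := hg2 0 0
    simp at h1 h2
    simp [h1, h2]
  · have hn : ‖x‖ ≠ 0 := norm_ne_zero_iff.2 hx
    have hu : ‖x‖⁻¹ • x ∈ Metric.sphere (0 : E) 1 := by
      simp [norm_smul, hn]
    have hxu : x = ‖x‖ • (‖x‖⁻¹ • x) := by rw [smul_smul, mul_inv_cancel₀ hn, one_smul]
    have h1 := (le_abs_self _).trans (hM _ hu)
    rw [div_le_iff₀ (hpos _ (hne _ hu))] at h1
    rw [hxu, hf2, hg2]
    have h2 : f (‖x‖⁻¹ • x) ≤ (|M| + 1) * g (‖x‖⁻¹ • x) :=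
      h1.trans (mul_le_mul_of_nonneg_right (by linarith [le_abs_self M]) (hpos _ (hne _ hu)).le)
    nlinarith [sq_nonneg ‖x‖]

/-! ### Injectivity of the divergence -/

/-- The `i`-th partial derivative, at `p`, of the bubble-multiple with coefficients `α, β, γ`. -/
noncomputable def gradB (A B C : ℝ × ℝ) (i : Fin 2) (α β γ : ℝ) (p : ℝ × ℝ) : ℝ :=
  evP (MvPolynomial.pderiv i (bubP (baryP A B C) (baryP A C B) α β γ)) p

lemma dBub_smul (L M lx mx s α β γ : ℝ) :
    dBub L M lx mx (s * α) (s * β) (s * γ) = s * dBub L M lx mx α β γ := by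
  simp only [dBub]; ring

lemma gradB_smul (A B C : ℝ × ℝ) (i : Fin 2) (s α β γ : ℝ) (p : ℝ × ℝ) :
    gradB A B C i (s * α) (s * β) (s * γ) p = s * gradB A B C i α β γ p := by
  fin_cases i
  · simp only [Fin.zero_eta, gradB, baryP, evP_pderiv_bubP_zero, dBub_smul]
  · simp only [Fin.mk_one, gradB, baryP, evP_pderiv_bubP_one, dBub_smul]

lemma continuous_gradB (A B C : ℝ × ℝ) (i : Fin 2) (j k l : Fin 6) :
    Continuous fun x : (Fin 6 → ℝ) × (ℝ × ℝ) => gradB A B C i (x.1 j) (x.1 k) (x.1 l) x.2 := by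
  fin_cases i
  · simp only [Fin.zero_eta, gradB, baryP, evP_pderiv_bubP_zero, dBub]; fun_prop
  · simp only [Fin.mk_one, gradB, baryP, evP_pderiv_bubP_one, dBub]; fun_prop

/-- An affine field `q = (c 0 + c 1 x + c 2 y, c 3 + c 4 x + c 5 y)`, in barycentric coordinates `x`,
`y` with gradients proportional to `(c2, -c1)` and `(-b2, b1)`, vanishes if the divergence of its
product with the bubble does. On an edge this divergence is the normal component of `q` times a
function that is nonzero inside the edge, so `q`, being affine, is tangent to every edge; hence it
vanishes at each vertex, where two independent normals meet, and so everywhere. -/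
lemma coeff_eq_zero_of_dBub (b1 b2 c1 c2 : ℝ) (hD : b1 * c2 - b2 * c1 ≠ 0) (c : Fin 6 → ℝ)
    (key : ∀ x y : ℝ, 0 ≤ x → 0 ≤ y → x + y ≤ 1 →
      dBub x y c2 (-b2) (c 0) (c 1) (c 2) + dBub x y (-c1) b1 (c 3) (c 4) (c 5) = 0) :
    c = 0 := by
  -- two interior points on each edge determine the normal component, which is affine there
  have ha1 := key 0 (1/3) (by norm_num) (by norm_num) (by norm_num)
  have ha2 := key 0 (2/3) (by norm_num) (by norm_num) (by norm_num)
  have hb1 := key (1/3) 0 (by norm_num) (by norm_num) (by norm_num)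
  have hb2 := key (2/3) 0 (by norm_num) (by norm_num) (by norm_num)
  have hd1 := key (1/3) (2/3) (by norm_num) (by norm_num) (by norm_num)
  have hd2 := key (2/3) (1/3) (by norm_num) (by norm_num) (by norm_num)
  simp only [dBub] at ha1 ha2 hb1 hb2 hd1 hd2
  -- two independent normals annihilate only the zero vector
  have solve : ∀ u w : ℝ, u * c2 - w * c1 = 0 →
      u * b2 - w * b1 = 0 → u = 0 ∧ w = 0 := by
    intro u w h1 h2
    have e1 : u * (b1 * c2 - b2 * c1) = 0 := by
      linear_combination b1 * h1 - c1 * h2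
    have e2 : w * (b1 * c2 - b2 * c1) = 0 := by
      linear_combination b2 * h1 - c2 * h2
    exact ⟨(mul_eq_zero.1 e1).resolve_right hD, (mul_eq_zero.1 e2).resolve_right hD⟩
  obtain ⟨z0, z3⟩ := solve (c 0) (c 3) (by linear_combination 9 * ha1 - 9 / 2 * ha2)
    (by linear_combination -9 * hb1 + 9 / 2 * hb2)
  rw [z0, z3] at ha1 ha2 hb1 hb2 hd1 hd2
  have n2 : c 2 * c2 - c 5 * c1 = 0 := by
    linear_combination 27 / 2 * (ha2 - ha1)
  have n1 : c 1 * b2 - c 4 * b1 = 0 := by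
    linear_combination -27 / 2 * (hb2 - hb1)
  obtain ⟨z1, z4⟩ := solve (c 1) (c 4)
    (by linear_combination n1 - 9 * hd2 + 9 / 2 * hd1) n1
  obtain ⟨z2, z5⟩ := solve (c 2) (c 5) n2
    (by linear_combination n2 + 9 * hd1 - 9 / 2 * hd2)
  funext i
  fin_cases i <;> assumption

/-- The divergence on the triangle determines the coefficients of a bubble field. -/
lemma coeff_eq_zero_of_div (A B C : ℝ × ℝ) (hD : det3 A B C ≠ 0) (c : Fin 6 → ℝ)
    (h : ∀ p ∈ convexHull ℝ ({A, B, C} : Set (ℝ × ℝ)),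
      gradB A B C 0 (c 0) (c 1) (c 2) p + gradB A B C 1 (c 3) (c 4) (c 5) p = 0) :
    c = 0 := by
  have hD' : det3 A C B = - det3 A B C := by simp only [det3]; ring
  set D := det3 A B C with hDdef
  -- the divergence at the point with barycentric coordinates `(1 - x - y, x, y)`, times `D`
  have key : ∀ x y : ℝ, 0 ≤ x → 0 ≤ y → x + y ≤ 1 →
      dBub x y (C.2 - A.2) (-(B.2 - A.2)) (c 0) (c 1) (c 2) +
        dBub x y (-(C.1 - A.1)) (B.1 - A.1) (c 3) (c 4) (c 5) = 0 := by
    intro x y hx hy hxy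
    have hm : (1 - x - y) • A + x • B + y • C ∈ convexHull ℝ ({A, B, C} : Set (ℝ × ℝ)) := by
      have := (convex_convexHull ℝ ({A, B, C} : Set (ℝ × ℝ))).sum_mem (t := Finset.univ)
        (w := ![1 - x - y, x, y]) (z := ![A, B, C])
        (by intro i _; fin_cases i <;> simp <;> linarith)
        (by simp [Fin.sum_univ_three]; ring)
        (by intro i _; apply subset_convexHull; fin_cases i <;> simp)
      simpa [Fin.sum_univ_three] using this
    have h1 := h _ hm
    simp only [gradB, baryP, evP_pderiv_bubP_zero, evP_pderiv_bubP_one, hD', ← hDdef] at h1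
    have hs : ∀ L M lx mx α β γ : ℝ, dBub L M (lx / D) (mx / D) α β γ =
      dBub L M lx mx α β γ / D := fun L M lx mx α β γ => by simp only [dBub]; ring
    have eL : (-A.1 * (C.2 - A.2) + A.2 * (C.1 - A.1)) / D +
        (C.2 - A.2) / D * ((1 - x - y) • A + x • B + y • C).1 +
        -(C.1 - A.1) / D * ((1 - x - y) • A + x • B + y • C).2 = x := by
      field_simp
      simp [hDdef, det3]
      ring
    have eM : (-A.1 * (B.2 - A.2) + A.2 * (B.1 - A.1)) / -D +
        (B.2 - A.2) / -D * ((1 - x - y) • A + x • B + y • C).1 +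
        -(B.1 - A.1) / -D * ((1 - x - y) • A + x • B + y • C).2 = y := by
      field_simp
      simp [hDdef, det3]
      ring
    rw [eL, eM] at h1
    simp only [div_neg, ← neg_div, neg_neg, hs, ← add_div] at h1
    simpa [hD] using h1
  exact coeff_eq_zero_of_dBub _ _ _ _ hD c key

/-! ### The inequality in terms of coefficients -/

open scoped Pointwise in
/-- If `F (t p) = t⁻² G p`, the integral of `F` over the scaled triangle `t K` is that of `G` over
`K`. Applied to squares of first derivatives, this makes both sides of the inequality independent
of the scale. -/
lemma setIntegral_smul_eq (A B C : ℝ × ℝ) (t : ℝ) (ht : 0 < t) (F G : ℝ × ℝ → ℝ)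
    (hFG : ∀ p, F (t • p) = t⁻¹ ^ 2 * G p) :
    ∫ p in convexHull ℝ ({t • A, t • B, t • C} : Set (ℝ × ℝ)), F p =
      ∫ p in convexHull ℝ ({A, B, C} : Set (ℝ × ℝ)), G p := by
  have hKt : convexHull ℝ ({t • A, t • B, t • C} : Set (ℝ × ℝ)) =
      t • convexHull ℝ ({A, B, C} : Set (ℝ × ℝ)) := by
    rw [← convexHull_smul]
    simp only [Set.smul_set_insert, Set.smul_set_singleton]
  have h := Measure.setIntegral_comp_smul_of_pos volume F (convexHull ℝ {A, B, C}) ht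
  have hr : Module.finrank ℝ (ℝ × ℝ) = 2 := by simp
  simp only [hFG, hr, integral_const_mul, smul_eq_mul] at h
  rw [inv_pow] at h
  rw [hKt]
  exact (mul_left_cancel₀ (inv_ne_zero (pow_ne_zero 2 ht.ne')) h).symm

attribute [irreducible] gradB

/-- The squared norm of the gradient of the bubble field with coefficients `c`. -/
noncomputable def gradSq (A B C : ℝ × ℝ) (c : Fin 6 → ℝ) (p : ℝ × ℝ) : ℝ :=
  (gradB A B C 0 (c 0) (c 1) (c 2) p) ^ 2 + (gradB A B C 1 (c 0) (c 1) (c 2) p) ^ 2 +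
    (gradB A B C 0 (c 3) (c 4) (c 5) p) ^ 2 + (gradB A B C 1 (c 3) (c 4) (c 5) p) ^ 2

/-- The squared divergence of the bubble field with coefficients `c`. -/
noncomputable def divSq (A B C : ℝ × ℝ) (c : Fin 6 → ℝ) (p : ℝ × ℝ) : ℝ :=
  (gradB A B C 0 (c 0) (c 1) (c 2) p + gradB A B C 1 (c 3) (c 4) (c 5) p) ^ 2

/-- The inequality on the triangle `A B C` itself, in terms of the six coefficients. -/
lemma exists_bound (A B C : ℝ × ℝ) (hK : AffineIndependent ℝ ![A, B, C]) :
    ∃ k : ℝ, 0 < k ∧ ∀ c : Fin 6 → ℝ,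
      ∫ p in convexHull ℝ ({A, B, C} : Set (ℝ × ℝ)), gradSq A B C c p ≤
        k ^ 2 * ∫ p in convexHull ℝ ({A, B, C} : Set (ℝ × ℝ)), divSq A B C c p := by
  have hD := det3_ne_zero A B C hK
  set K : Set (ℝ × ℝ) := convexHull ℝ ({A, B, C} : Set (ℝ × ℝ)) with hKdef
  have hKc : IsCompact K := (Set.toFinite _).isCompact_convexHull ℝ
  have hKint : K ⊆ closure (interior K) := by
    refine subset_closure.trans
      ((convex_convexHull ℝ _).closure_interior_eq_closure_of_nonempty_interior ?_).ge
    rw [interior_convexHull_nonempty_iff_affineSpan_eq_top]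
    have := hK.affineSpan_eq_top_iff_card_eq_finrank_add_one.2 (by simp)
    have hr : Set.range ![A, B, C] = {A, B, C} := by
      ext p
      simp only [Set.mem_range, Fin.exists_fin_succ, Set.mem_insert_iff, Set.mem_singleton_iff]
      simp [eq_comm]
    rwa [hr] at this
  have hnn : ∀ c p, 0 ≤ divSq A B C c p := fun c p => by
    unfold divSq
    exact sq_nonneg _
  have hcont := continuous_gradB A B C
  have h1c : Continuous (Function.uncurry (gradSq A B C)) := by
    simp only [Function.uncurry_def, gradSq]
    exact ((((hcont 0 0 1 2).pow 2).add ((hcont 1 0 1 2).pow 2)).add ((hcont 0 3 4 5).pow 2)).add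
      ((hcont 1 3 4 5).pow 2)
  have dvc : Continuous (Function.uncurry (divSq A B C)) := by
    simp only [Function.uncurry_def, divSq]
    exact ((hcont 0 0 1 2).add (hcont 1 3 4 5)).pow 2
  exact exists_le_mul_of_homogeneous
    (fun c => ∫ p in K, gradSq A B C c p) (fun c => ∫ p in K, divSq A B C c p)
    (continuous_parametric_integral_of_continuous h1c hKc)
    (continuous_parametric_integral_of_continuous dvc hKc)
    (fun s c => by
      rw [← integral_const_mul]
      congr 1 with p
      simp only [gradSq, Pi.smul_apply, smul_eq_mul, gradB_smul]
      ring)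
    (fun s c => by
      rw [← integral_const_mul]
      congr 1 with p
      simp only [divSq, Pi.smul_apply, smul_eq_mul, gradB_smul]
      ring)
    (fun c hc => by
      have hnn0 : 0 ≤ ∫ p in K, divSq A B C c p := integral_nonneg (hnn c)
      refine lt_of_le_of_ne hnn0 fun h0 => hc ?_
      have dvc' : Continuous (divSq A B C c) := 
        dvc.comp (Continuous.prodMk_right c)
      have hae : divSq A B C c =ᵐ[volume.restrict K] 0 := 
        (setIntegral_eq_zero_iff_of_nonneg_ae (Filter.Eventually.of_forall (hnn c))
          (dvc'.continuousOn.integrableOn_compact hKc)).1 h0.symm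
      have heq : Set.EqOn (divSq A B C c) 0 K :=
        Measure.eqOn_of_ae_eq hae dvc'.continuousOn continuousOn_const hKint
      refine coeff_eq_zero_of_div A B C hD c fun p hp => ?_
      have hp0 := heq hp
      rw [divSq, Pi.zero_apply] at hp0
      exact pow_eq_zero_iff two_ne_zero |>.1 hp0)

/-- There is a constant C > 0, depending only on the shape of the triangle K
    (in particular invariant under scalings t•K of K), such that every pair of
    degree-≤4 polynomials vanishing on the boundary of the scaled triangle satisfies
    |v|_{H¹} ≤ C ‖div v‖_{L²}. -/
theorem stmt12 (A B C : ℝ × ℝ) (hK : AffineIndependent ℝ ![A, B, C]) :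
    ∃ Cc : ℝ, 0 < Cc ∧ ∀ t : ℝ, 0 < t →
      ∀ v1 v2 : MvPolynomial (Fin 2) ℝ,
        v1.totalDegree ≤ 4 → v2.totalDegree ≤ 4 →
        (∀ p ∈ segment ℝ (t • A) (t • B) ∪ segment ℝ (t • B) (t • C) ∪
            segment ℝ (t • C) (t • A),
          evP v1 p = 0 ∧ evP v2 p = 0) →
        Real.sqrt (∫ p in convexHull ℝ ({t • A, t • B, t • C} : Set (ℝ × ℝ)),
            (evP (MvPolynomial.pderiv 0 v1) p)^2 + (evP (MvPolynomial.pderiv 1 v1) p)^2 +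
            (evP (MvPolynomial.pderiv 0 v2) p)^2 + (evP (MvPolynomial.pderiv 1 v2) p)^2) ≤
          Cc * Real.sqrt (∫ p in convexHull ℝ ({t • A, t • B, t • C} : Set (ℝ × ℝ)),
            (evP (MvPolynomial.pderiv 0 v1 + MvPolynomial.pderiv 1 v2) p)^2) := by
  have hD := det3_ne_zero A B C hK
  obtain ⟨k, hk, hle⟩ := exists_bound A B C hK
  refine ⟨k, hk, fun t ht v1 v2 hv1 hv2 hv => ?_⟩
  have hDt : det3 (t • A) (t • B) (t • C) ≠ 0 := by
    have : det3 (t • A) (t • B) (t • C) = t ^ 2 * det3 A B C := by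
      simp only [det3, Prod.smul_fst, Prod.smul_snd, smul_eq_mul]; ring
    rw [this]
    exact mul_ne_zero (pow_ne_zero 2 ht.ne') hD
  obtain ⟨α, β, γ, rfl⟩ := eq_bubP_of_vanish _ _ _ hDt v1 hv1 fun p hp => (hv p hp).1
  obtain ⟨α', β', γ', rfl⟩ := eq_bubP_of_vanish _ _ _ hDt v2 hv2 fun p hp => (hv p hp).2
  have hadd : ∀ (q r : MvPolynomial (Fin 2) ℝ) p, evP (q + r) p = evP q p + evP r p :=
    fun q r p => by simp [evP]
  rw [setIntegral_smul_eq A B C t ht _ (gradSq A B C ![α, β, γ, α', β', γ']) fun p => by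
      simp only [evP_pderiv_smul A B C t ht.ne']
      simp only [gradSq, gradB, Matrix.cons_val]
      ring,
    setIntegral_smul_eq A B C t ht _ (divSq A B C ![α, β, γ, α', β', γ']) fun p => by
      simp only [hadd, evP_pderiv_smul A B C t ht.ne']
      simp only [divSq, gradB, Matrix.cons_val]
      ring]
  calc Real.sqrt (∫ p in convexHull ℝ {A, B, C}, gradSq A B C ![α, β, γ, α', β', γ'] p)
      ≤ Real.sqrt (k ^ 2 * ∫ p in convexHull ℝ {A, B, C}, divSq A B C ![α, β, γ, α', β', γ'] p) := Real.sqrt_le_sqrt (hle _)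
    _ = k * Real.sqrt (∫ p in convexHull ℝ {A, B, C}, divSq A B C ![α, β, γ, α', β', γ'] p) := by
      rw [Real.sqrt_mul (sq_nonneg k), Real.sqrt_sq hk.le]
end
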